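/- With V_{θ,n}^H and U_{θ,n}^H defined as in the backward recursions below, for every n = 1,…,H−1 and every (x₁,…,x_n) ∈ (ℤ⁺)ⁿ with h_n(x₁,…,x_n) > 0, the inequality min{λ₀ f_{θ₀}^n(x₁,…,x_n), λ₁ f_{θ₁}^n(x₁,…,x_n)} ≤ f_θ^n(x₁,…,x_n) + Σ_{x_{n+1}∈ℤ⁺} V_{θ,n+1}^H(x₁,…,x_{n+1}) holds if and only if min{λ₀ g_{θ₀}^n(s_n), λ₁ g_{θ₁}^n(s_n)} ≤ g_θ^n(s_n) + 𝒥_{n+1} U_{θ,n+1}^H(s_n), where s_n = x₁+…+x_n. Consequently the optimal stopping rule ψ_n = I{min{λ₀ f_{θ₀}^n, λ₁ f_{θ₁}^n} ≤ f_θ^n + Σ V_{θ,n+1}^H} is a function of the sufficient statistic s_n only. -/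

import Mathlib

/-!
The functions `V` on tuples and `U` on sums are proportional at every stage:
`V_n(x) * C_n(s) = h_n(x) * U_n(s)` with `s = x₁ + … + x_n` (`Vaux_mul_Cfun`). This follows by
backward induction. The densities satisfy `f_θ^n(x) * C_n(s) = h_n(x) * g_θ^n(s)` by definition,
minima commute with multiplication by the nonnegative numbers `C_n(s)` and `h_n(x)`, and the
weights `d_{n+1}` are exactly those for which the continuation sum of `V_{n+1}` corresponds to
`𝒥_{n+1} U_{n+1}` (`tsum_Vaux_mul_Cfun`). The sums are compared term by
term, as `∑'` commutes with multiplication by constants. When `C_{n+1}(s+y) = 0`, so that `d_{n+1}(y,s) = 0`,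
also `h_{n+1}(x,y) = 0` and hence `V_{n+1}(x,y) = 0` (`Vaux_eq_zero`).

If `h_n(x) > 0` then `C_n(s) > 0`, so the two stopping inequalities differ by the positive factor
`C_n(s) / h_n(x)`.
-/

open scoped BigOperators

/-- `b(θ) = log Σ_{x∈ℤ⁺} e^{θx} h(x)`, the log-partition function. -/
noncomputable def expFamilyB (h : ℕ → ℝ) (θ : ℝ) : ℝ :=
  Real.log (∑' x : ℕ, Real.exp (θ * x) * h x)

/-- `C_n(s) = Σ_{x₁+…+x_n=s} ∏ h(x_i)`. -/
noncomputable def Cfun (h : ℕ → ℝ) (n s : ℕ) : ℝ :=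
  ∑ x ∈ Finset.Nat.antidiagonalTuple n s, ∏ i, h (x i)

/-- `g_θ^n(s) = C_n(s) exp(θ s − n b(θ))`, the pmf of the sufficient statistic. -/
noncomputable def gsuff (h : ℕ → ℝ) (θ : ℝ) (n s : ℕ) : ℝ :=
  Cfun h n s * Real.exp (θ * s - n * expFamilyB h θ)

/-- `h_n(x₁,…,x_n) = ∏ h(x_i)`. -/
noncomputable def hjoint (h : ℕ → ℝ) (n : ℕ) (x : Fin n → ℕ) : ℝ :=
  ∏ i, h (x i)

/-- `f_θ^n(x₁,…,x_n) = exp(θ s_n − n b(θ)) h_n(x₁,…,x_n)`, the joint pmf. -/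
noncomputable def fjoint (h : ℕ → ℝ) (θ : ℝ) (n : ℕ) (x : Fin n → ℕ) : ℝ :=
  Real.exp (θ * (∑ i, (x i : ℝ)) - n * expFamilyB h θ) * hjoint h n x

/-- `d_n(x,s) = C₁(x) C_{n−1}(s) / C_n(s+x)` (`= 0` when `C_n(s+x) = 0`, by
division-by-zero convention). -/
noncomputable def dcoef (h : ℕ → ℝ) (n x s : ℕ) : ℝ :=
  h x * Cfun h (n - 1) s / Cfun h n (s + x)

/-- `𝒥_n U(s) = Σ_{x∈ℤ⁺} U(s+x) d_n(x,s)`. -/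
noncomputable def Jop (h : ℕ → ℝ) (n : ℕ) (U : ℕ → ℝ) (s : ℕ) : ℝ :=
  ∑' x : ℕ, U (s + x) * dcoef h n x s

/-- `V_{θ,n}^H` via backward recursion; the first argument is the "fuel" `m = H − n`,
so `Vaux … m n = V_{θ,n}^H` when `m = H − n` (in particular `Vaux … 0 H = V_{θ,H}^H`). -/
noncomputable def Vaux (h : ℕ → ℝ) (θ₀ θ₁ θ lam₀ lam₁ : ℝ) : ℕ → (n : ℕ) → (Fin n → ℕ) → ℝ
  | 0, n, x => min (lam₀ * fjoint h θ₀ n x) (lam₁ * fjoint h θ₁ n x)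
  | m + 1, n, x =>
      min (min (lam₀ * fjoint h θ₀ n x) (lam₁ * fjoint h θ₁ n x))
        (fjoint h θ n x + ∑' y : ℕ, Vaux h θ₀ θ₁ θ lam₀ lam₁ m (n + 1) (Fin.snoc x y))

/-- `U_{θ,n}^H` via backward recursion; the first argument is the "fuel" `m = H − n`,
so `Uaux … H m = U_{θ,H−m}^H` (in particular `Uaux … H 0 = U_{θ,H}^H`). -/
noncomputable def Uaux (h : ℕ → ℝ) (θ₀ θ₁ θ lam₀ lam₁ : ℝ) (H : ℕ) : ℕ → ℕ → ℝ
  | 0, s => min (lam₀ * gsuff h θ₀ H s) (lam₁ * gsuff h θ₁ H s)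
  | m + 1, s =>
      min (min (lam₀ * gsuff h θ₀ (H - (m + 1)) s) (lam₁ * gsuff h θ₁ (H - (m + 1)) s))
        (gsuff h θ (H - (m + 1)) s + Jop h (H - m) (Uaux h θ₀ θ₁ θ lam₀ lam₁ H m) s)

/-- The stopping inequality written in terms of the joint densities and the
value functions `V_{θ,n+1}^H` (the condition defining `ψ_n` in (11a_3)). -/
noncomputable def stopCondV (h : ℕ → ℝ) (θ₀ θ₁ θ lam₀ lam₁ : ℝ) (H n : ℕ)
    (x : Fin n → ℕ) : Prop :=
  min (lam₀ * fjoint h θ₀ n x) (lam₁ * fjoint h θ₁ n x) ≤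
    fjoint h θ n x + ∑' y : ℕ, Vaux h θ₀ θ₁ θ lam₀ lam₁ (H - (n + 1)) (n + 1) (Fin.snoc x y)

lemma hjoint_nonneg {h : ℕ → ℝ} (hpos : ∀ x, 0 ≤ h x) (n : ℕ) (x : Fin n → ℕ) :
    0 ≤ hjoint h n x :=
  Finset.prod_nonneg fun i _ => hpos (x i)

lemma Cfun_nonneg {h : ℕ → ℝ} (hpos : ∀ x, 0 ≤ h x) (n s : ℕ) : 0 ≤ Cfun h n s :=
  Finset.sum_nonneg fun x _ => Finset.prod_nonneg fun i _ => hpos (x i)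

lemma hjoint_le_Cfun {h : ℕ → ℝ} (hpos : ∀ x, 0 ≤ h x) (n : ℕ) (x : Fin n → ℕ) :
    hjoint h n x ≤ Cfun h n (∑ i, x i) :=
  Finset.single_le_sum (f := fun x : Fin n → ℕ => ∏ i, h (x i))
    (fun x _ => Finset.prod_nonneg fun i _ => hpos (x i))
    (Finset.Nat.mem_antidiagonalTuple.2 rfl)

lemma hjoint_snoc (h : ℕ → ℝ) (n : ℕ) (x : Fin n → ℕ) (y : ℕ) :
    hjoint h (n + 1) (Fin.snoc x y) = hjoint h n x * h y := by
  simp [hjoint, Fin.prod_univ_castSucc]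

lemma sum_snoc (n : ℕ) (x : Fin n → ℕ) (y : ℕ) :
    ∑ i, (Fin.snoc x y : Fin (n + 1) → ℕ) i = (∑ i, x i) + y := by
  simp [Fin.sum_univ_castSucc]

lemma fjoint_mul_Cfun (h : ℕ → ℝ) (θ : ℝ) (n : ℕ) (x : Fin n → ℕ) :
    fjoint h θ n x * Cfun h n (∑ i, x i) = hjoint h n x * gsuff h θ n (∑ i, x i) := by
  simp only [fjoint, gsuff, Nat.cast_sum]
  ring

lemma min_fjoint_mul_Cfun {h : ℕ → ℝ} (hpos : ∀ x, 0 ≤ h x) (θ₀ θ₁ lam₀ lam₁ : ℝ)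
    (n : ℕ) (x : Fin n → ℕ) :
    min (lam₀ * fjoint h θ₀ n x) (lam₁ * fjoint h θ₁ n x) * Cfun h n (∑ i, x i) =
      hjoint h n x *
        min (lam₀ * gsuff h θ₀ n (∑ i, x i)) (lam₁ * gsuff h θ₁ n (∑ i, x i)) := by
  rw [min_mul_of_nonneg _ _ (Cfun_nonneg hpos _ _), mul_min_of_nonneg _ _ (hjoint_nonneg hpos _ _),
    mul_assoc, mul_assoc, fjoint_mul_Cfun, fjoint_mul_Cfun, mul_left_comm, mul_left_comm lam₁]

lemma Vaux_eq_zero (h : ℕ → ℝ) (θ₀ θ₁ θ lam₀ lam₁ : ℝ) (m n : ℕ) (x : Fin n → ℕ)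
    (hx : hjoint h n x = 0) : Vaux h θ₀ θ₁ θ lam₀ lam₁ m n x = 0 := by
  induction m generalizing n with
  | zero => simp [Vaux, fjoint, hx]
  | succ m ih =>
    have hV (y : ℕ) : Vaux h θ₀ θ₁ θ lam₀ lam₁ m (n + 1) (Fin.snoc x y) = 0 :=
      ih _ _ (by rw [hjoint_snoc, hx, zero_mul])
    simp [Vaux, fjoint, hx, hV]

/-- If `V_{n+1}` is proportional to an arbitrary `U` in the required way, then the continuation sum
of `V_{n+1}` is proportional to `𝒥_{n+1} U`; this is the induction step for `Vaux_mul_Cfun`. -/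
lemma tsum_Vaux_mul_Cfun {h : ℕ → ℝ} (hpos : ∀ x, 0 ≤ h x) (θ₀ θ₁ θ lam₀ lam₁ : ℝ) (m n : ℕ)
    (U : ℕ → ℝ)
    (hU : ∀ z : Fin (n + 1) → ℕ,
      Vaux h θ₀ θ₁ θ lam₀ lam₁ m (n + 1) z * Cfun h (n + 1) (∑ i, z i) =
        hjoint h (n + 1) z * U (∑ i, z i))
    (x : Fin n → ℕ) :
    (∑' y : ℕ, Vaux h θ₀ θ₁ θ lam₀ lam₁ m (n + 1) (Fin.snoc x y)) * Cfun h n (∑ i, x i) =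
      hjoint h n x * Jop h (n + 1) U (∑ i, x i) := by
  rw [Jop, ← tsum_mul_right, ← tsum_mul_left]
  refine tsum_congr fun y => ?_
  have hy := hU (Fin.snoc x y)
  have hle := hjoint_le_Cfun hpos (n + 1) (Fin.snoc x y)
  rw [sum_snoc] at hy hle
  simp only [dcoef, Nat.add_sub_cancel]
  by_cases hC : Cfun h (n + 1) ((∑ i, x i) + y) = 0
  · have hz : hjoint h (n + 1) (Fin.snoc x y) = 0 :=
      le_antisymm (hC ▸ hle) (hjoint_nonneg hpos _ _)
    rw [Vaux_eq_zero _ _ _ _ _ _ _ _ _ hz, hC]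
    simp
  · rw [hjoint_snoc] at hy
    rw [eq_div_of_mul_eq hC hy]
    ring

/-- Proportionality of the two backward recursions at stage `n = H - m`. -/
lemma Vaux_mul_Cfun {h : ℕ → ℝ} (hpos : ∀ x, 0 ≤ h x) (θ₀ θ₁ θ lam₀ lam₁ : ℝ) (H m n : ℕ)
    (hH : H = n + m) (x : Fin n → ℕ) :
    Vaux h θ₀ θ₁ θ lam₀ lam₁ m n x * Cfun h n (∑ i, x i) =
      hjoint h n x * Uaux h θ₀ θ₁ θ lam₀ lam₁ H m (∑ i, x i) := by
  induction m generalizing n with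
  | zero =>
    obtain rfl : H = n := hH
    exact min_fjoint_mul_Cfun hpos θ₀ θ₁ lam₀ lam₁ H x
  | succ m ih =>
    have h₁ : H - (m + 1) = n := by omega
    have h₂ : H - m = n + 1 := by omega
    rw [Vaux, Uaux, h₁, h₂, min_mul_of_nonneg _ _ (Cfun_nonneg hpos _ _),
      mul_min_of_nonneg _ _ (hjoint_nonneg hpos _ _), min_fjoint_mul_Cfun hpos, add_mul, mul_add,
      fjoint_mul_Cfun,
      tsum_Vaux_mul_Cfun hpos _ _ _ _ _ _ _ _ (fun z => ih (n + 1) (by omega) z)]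

lemma stopCondV_iff {h : ℕ → ℝ} (hpos : ∀ x, 0 ≤ h x) (θ₀ θ₁ θ lam₀ lam₁ : ℝ) (H n : ℕ)
    (hn : n + 1 ≤ H) (x : Fin n → ℕ) (hx : 0 < hjoint h n x) :
    stopCondV h θ₀ θ₁ θ lam₀ lam₁ H n x ↔
      min (lam₀ * gsuff h θ₀ n (∑ i, x i)) (lam₁ * gsuff h θ₁ n (∑ i, x i)) ≤
        gsuff h θ n (∑ i, x i) +
          Jop h (n + 1) (Uaux h θ₀ θ₁ θ lam₀ lam₁ H (H - (n + 1))) (∑ i, x i) := by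
  have hC : 0 < Cfun h n (∑ i, x i) := hx.trans_le (hjoint_le_Cfun hpos n x)
  rw [stopCondV, ← mul_le_mul_iff_left₀ hC, min_fjoint_mul_Cfun hpos, add_mul, fjoint_mul_Cfun,
    tsum_Vaux_mul_Cfun hpos _ _ _ _ _ _ _ _
      (fun z => Vaux_mul_Cfun hpos θ₀ θ₁ θ lam₀ lam₁ H _ (n + 1) (by omega) z),
    ← mul_add, mul_le_mul_iff_right₀ hx]

/-- For `1 ≤ n ≤ H−1` and `(x₁,…,x_n)` with `h_n > 0`, the stopping
inequality in terms of `V_{θ,n+1}^H` holds iff the corresponding inequality in terms of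
the sufficient statistic, `min{λ₀g_{θ₀}^n(s), λ₁g_{θ₁}^n(s)} ≤ g_θ^n(s) + 𝒥_{n+1}U_{θ,n+1}^H(s)`,
holds at `s = s_n`; consequently the optimal stopping rule `ψ_n` is a function of `s_n` only. -/
theorem stmt_1 (h : ℕ → ℝ) (hpos : ∀ x, 0 ≤ h x)
    (θ₀ θ₁ θ : ℝ)
    (hθ₀ : Summable fun x : ℕ => Real.exp (θ₀ * x) * h x)
    (hθ₁ : Summable fun x : ℕ => Real.exp (θ₁ * x) * h x)
    (hθ : Summable fun x : ℕ => Real.exp (θ * x) * h x)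
    (hlt : θ₀ < θ₁)
    (lam₀ lam₁ : ℝ) (hlam₀ : 0 ≤ lam₀) (hlam₁ : 0 ≤ lam₁)
    (H : ℕ) (hH : 1 ≤ H) :
    (∀ n : ℕ, 1 ≤ n → n ≤ H - 1 → ∀ x : Fin n → ℕ, 0 < hjoint h n x →
      (stopCondV h θ₀ θ₁ θ lam₀ lam₁ H n x ↔
        min (lam₀ * gsuff h θ₀ n (∑ i, x i)) (lam₁ * gsuff h θ₁ n (∑ i, x i)) ≤
          gsuff h θ n (∑ i, x i) +
            Jop h (n + 1) (Uaux h θ₀ θ₁ θ lam₀ lam₁ H (H - (n + 1))) (∑ i, x i)))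
    ∧
    (∀ n : ℕ, 1 ≤ n → n ≤ H - 1 → ∀ x x' : Fin n → ℕ,
      0 < hjoint h n x → 0 < hjoint h n x' → (∑ i, x i) = (∑ i, x' i) →
      (stopCondV h θ₀ θ₁ θ lam₀ lam₁ H n x ↔ stopCondV h θ₀ θ₁ θ lam₀ lam₁ H n x')) := by
  refine ⟨fun n _ hn x hx => stopCondV_iff hpos _ _ _ _ _ H n (by omega) x hx,
    fun n _ hn x x' hx hx' hs => ?_⟩
  rw [stopCondV_iff hpos _ _ _ _ _ H n (by omega) x hx,
    stopCondV_iff hpos _ _ _ _ _ H n (by omega) x' hx', hs]
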